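/- Let n ≥ 3, 1 ≤ k ≤ n, A diagonal in 𝒜_k (with λ_max(A) < 1/2 when k = 1), x₀ ∈ B_{1/2}(0)∖{0}, and fix c ≥ c* (the constant from the exterior existence result). For 0 < ε₁ < ε₂ < 1/2 let u^{ε₁} and u^{ε₂} be the unique k-convex solutions of the exterior problems S_k(D²u) = 1 in ℝⁿ∖B̄_{ε_i}(x₀), u = 0 on ∂B_{ε_i}(x₀), lim_{|x|→∞}(u(x) − (½xᵀAx + c)) = 0, and let ũ^{ε_i} denote their extensions by 0 on B_{ε_i}(x₀). Then ũ^{ε₁}(x) ≥ ũ^{ε₂}(x) for every x ∈ ℝⁿ. -/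

import Mathlib

open scoped Classical Topology
open Real Filter MeasureTheory

noncomputable section

/-- Euclidean space ℝⁿ. -/
abbrev Euc (n : ℕ) : Type := EuclideanSpace ℝ (Fin n)

/-- The standard basis vector `e i`. -/
def ebasis (n : ℕ) (i : Fin n) : Euc n := EuclideanSpace.single i 1

/-- The Hessian matrix `D²u(x)`. -/
def hessMat (n : ℕ) (u : Euc n → ℝ) (x : Euc n) : Matrix (Fin n) (Fin n) ℝ :=
  Matrix.of fun i j => iteratedFDeriv ℝ 2 u x ![ebasis n i, ebasis n j]

/-- The Laplacian `Δu(x)` (trace of the Hessian). -/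
def lapl (n : ℕ) (u : Euc n → ℝ) (x : Euc n) : ℝ := ∑ i, hessMat n u x i i

/-- The `k`-th elementary symmetric function of the eigenvalues of an `n × n` matrix,
expressed through the coefficients of the characteristic polynomial. -/
def matSk (n k : ℕ) (M : Matrix (Fin n) (Fin n) ℝ) : ℝ :=
  (-1 : ℝ) ^ k * (Matrix.charpoly M).coeff (n - k)

/-- `S_k(D²u)(x)`. -/
def SkHess (n k : ℕ) (u : Euc n → ℝ) (x : Euc n) : ℝ := matSk n k (hessMat n u x)

/-- `u` is `k`-convex on `U`: the eigenvalues of the Hessian lie in the Gårding cone `Γ_k`. -/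
def KConvexOn (n k : ℕ) (u : Euc n → ℝ) (U : Set (Euc n)) : Prop :=
  ∀ x ∈ U, ∀ j : ℕ, 1 ≤ j → j ≤ k → 0 < matSk n j (hessMat n u x)

/-- Membership in the class `𝒜_k`: symmetric positive definite with `S_k(λ(A)) = 1`. -/
def MemA (n k : ℕ) (A : Matrix (Fin n) (Fin n) ℝ) : Prop :=
  A.IsSymm ∧ A.PosDef ∧ matSk n k A = 1

/-- The quadratic form `½ xᵀ A x`. -/
def quadA (n : ℕ) (A : Matrix (Fin n) (Fin n) ℝ) (x : Euc n) : ℝ :=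
  (1 / 2) * ∑ i, ∑ j, x i * A i j * x j

/-- The linear form `b ⋅ x`. -/
def linB (n : ℕ) (b x : Euc n) : ℝ := ∑ i, b i * x i

/-- `λ_max(A) < c`, expressed through the quadratic form (for symmetric `A`). -/
def lambdaMaxLT (n : ℕ) (A : Matrix (Fin n) (Fin n) ℝ) (c : ℝ) : Prop :=
  ∀ x : Euc n, x ≠ 0 → ∑ i, ∑ j, x i * A i j * x j < c * ‖x‖ ^ 2

/-- `u` is smooth on an open neighbourhood of the (closed) set `S`;
this is our rendering of `u ∈ C^∞(S)` for a closed set `S`. -/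
def SmoothOnNhd (n : ℕ) (u : Euc n → ℝ) (S : Set (Euc n)) : Prop :=
  ∃ U : Set (Euc n), IsOpen U ∧ S ⊆ U ∧ ContDiffOn ℝ (⊤ : ℕ∞) u U

/-- A smooth bounded strictly convex domain in ℝⁿ. -/
def SmoothStrictConvexDomain (n : ℕ) (Ω : Set (Euc n)) : Prop :=
  IsOpen Ω ∧ Bornology.IsBounded Ω ∧ Ω.Nonempty ∧ Convex ℝ Ω ∧ StrictConvex ℝ Ω ∧
    ∃ f : Euc n → ℝ, ContDiff ℝ (⊤ : ℕ∞) f ∧ Ω = {x | f x < 0} ∧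
      ∀ x ∈ frontier Ω, fderiv ℝ f x ≠ 0

/-- Extension of `u` by the constant value `v` inside `Ω`. -/
def extBy (n : ℕ) (Ω : Set (Euc n)) (v : ℝ) (u : Euc n → ℝ) : Euc n → ℝ :=
  fun x => if x ∈ Ω then v else u x

/-- `u` (vanishing on `∂Ω`) is quasiconvex: all sublevel sets of its zero-extension are convex. -/
def QuasiconvexSol (n : ℕ) (Ω : Set (Euc n)) (u : Euc n → ℝ) : Prop :=
  ∀ t : ℝ, Convex ℝ {x : Euc n | extBy n Ω 0 u x ≤ t}

/-- The `k`-th elementary symmetric polynomial of a vector `a ∈ ℝⁿ`. -/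
def esymmVec (n k : ℕ) (a : Fin n → ℝ) : ℝ :=
  ∑ s ∈ Finset.powersetCard k (Finset.univ : Finset (Fin n)), ∏ i ∈ s, a i

/-- `h_k(a) = max_i S_{k-1}(a)|_{a_i = 0} · a_i`. -/
def hkfun (n k : ℕ) (a : Fin n → ℝ) : ℝ :=
  ⨆ i : Fin n, esymmVec n (k - 1) (Function.update a i 0) * a i

/-- The exponent `-k / (2 h_k(a))`. -/
def genExp (n k : ℕ) (a : Fin n → ℝ) : ℝ := -(k : ℝ) / (2 * hkfun n k a)

/-- The integrand `(1 + α t^{-k/(2h_k(a))})^{1/k}`. -/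
def genInt (n k : ℕ) (a : Fin n → ℝ) (α t : ℝ) : ℝ :=
  (1 + α * t ^ genExp n k a) ^ ((1 : ℝ) / (k : ℝ))

/-- The generalized symmetric function `ū`. -/
def ubar (n k : ℕ) (a : Fin n → ℝ) (R₀ α : ℝ) (x : Euc n) : ℝ :=
  ∫ t in R₀..(quadA n (Matrix.diagonal a) x), genInt n k a α t

/-- `μ(α) = ∫_{R₀}^∞ ((1 + α t^{-k/(2h_k(a))})^{1/k} - 1) dt - R₀`. -/
def muA (n k : ℕ) (a : Fin n → ℝ) (R₀ α : ℝ) : ℝ :=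
  (∫ t in Set.Ioi R₀, (genInt n k a α t - 1)) - R₀

/-- The ellipsoid `E_R(xb) = {x : ½ (x - xb)ᵀ A (x - xb) < R}`. -/
def ESet (n : ℕ) (A : Matrix (Fin n) (Fin n) ℝ) (xb : Euc n) (R : ℝ) : Set (Euc n) :=
  {x : Euc n | quadA n A (x - xb) < R}

/-- The non-concentric convex ring `Ω_R^ε = E_R(0) ∖ B̄_ε(x₀)`. -/
def OmegaRe (n : ℕ) (a : Fin n → ℝ) (x₀ : Euc n) (ε R : ℝ) : Set (Euc n) :=
  ESet n (Matrix.diagonal a) 0 R \ closure (Metric.ball x₀ ε)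

/-- `u` is a `k`-convex solution of the approximating problem
`S_k(D²u) = 1` in `Ω_R^ε`, `u = 0` on `∂B_ε(x₀)`, `u = ū` on `∂E_R(0)`. -/
def ApproxSol (n k : ℕ) (a : Fin n → ℝ) (x₀ : Euc n) (ε R R₀ α : ℝ)
    (u : Euc n → ℝ) : Prop :=
  SmoothOnNhd n u (closure (OmegaRe n a x₀ ε R)) ∧
  KConvexOn n k u (OmegaRe n a x₀ ε R) ∧
  (∀ x ∈ OmegaRe n a x₀ ε R, SkHess n k u x = 1) ∧
  (∀ x ∈ Metric.sphere x₀ ε, u x = 0) ∧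
  (∀ x : Euc n, quadA n (Matrix.diagonal a) x = R → u x = ubar n k a R₀ α x)

/-- The constant `C_ε` of the boundary gradient estimate. -/
def Ceps (n k : ℕ) (C ε : ℝ) : ℝ :=
  if 2 * k < n then C * ((n : ℝ) / (k : ℝ) - 2) * ε⁻¹
  else if 2 * k = n then C * ε⁻¹ * |Real.log ε|⁻¹
  else C * (2 - (n : ℝ) / (k : ℝ)) * ε ^ (1 - (n : ℝ) / (k : ℝ))

/-- `u` is a `k`-convex solution of the exterior Dirichlet problem
`S_k(D²u) = 1` in `ℝⁿ ∖ B̄_ε(x₀)`, `u = 0` on `∂B_ε(x₀)`, with quadratic asymptotics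
`½ xᵀAx + c` at infinity (`A = diag a`). -/
def ExtBallSol (n k : ℕ) (a : Fin n → ℝ) (x₀ : Euc n) (ε c : ℝ) (u : Euc n → ℝ) : Prop :=
  SmoothOnNhd n u (Metric.ball x₀ ε)ᶜ ∧
  KConvexOn n k u (closure (Metric.ball x₀ ε))ᶜ ∧
  (∀ x ∈ (closure (Metric.ball x₀ ε))ᶜ, SkHess n k u x = 1) ∧
  (∀ x ∈ Metric.sphere x₀ ε, u x = 0) ∧
  Tendsto (fun x : Euc n => u x - (quadA n (Matrix.diagonal a) x + c))
    (cocompact (Euc n)) (𝓝 0)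

/-- `u` is a `k`-convex solution of the exterior Dirichlet problem on `ℝⁿ ∖ Ω₀` with
asymptotics `½ xᵀAx + b·x + c` at infinity. -/
def ExtDomSol (n k : ℕ) (Ω₀ : Set (Euc n)) (A : Matrix (Fin n) (Fin n) ℝ) (b : Euc n)
    (c : ℝ) (u : Euc n → ℝ) : Prop :=
  SmoothOnNhd n u Ω₀ᶜ ∧
  KConvexOn n k u (closure Ω₀)ᶜ ∧
  (∀ x ∈ (closure Ω₀)ᶜ, SkHess n k u x = 1) ∧
  (∀ x ∈ frontier Ω₀, u x = 0) ∧
  Tendsto (fun x : Euc n => u x - (quadA n A x + linB n b x + c))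
    (cocompact (Euc n)) (𝓝 0)

/-- `u` is a solution of the exterior Dirichlet problem for the Laplace equation
`Δu = 1` on `ℝⁿ ∖ Ω₀` with asymptotics `½ xᵀAx + b·x + c` at infinity. -/
def ExtDomSolLap (n : ℕ) (Ω₀ : Set (Euc n)) (A : Matrix (Fin n) (Fin n) ℝ) (b : Euc n)
    (c : ℝ) (u : Euc n → ℝ) : Prop :=
  SmoothOnNhd n u Ω₀ᶜ ∧
  (∀ x ∈ (closure Ω₀)ᶜ, lapl n u x = 1) ∧
  (∀ x ∈ frontier Ω₀, u x = 0) ∧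
  Tendsto (fun x : Euc n => u x - (quadA n A x + linB n b x + c))
    (cocompact (Euc n)) (𝓝 0)

/-- `u` solves the exterior problem `Δu = 0` in `ℝⁿ ∖ Ω̄`, `u = 1` on `∂Ω`,
`u → 0` at infinity. -/
def HarmExtSol (n : ℕ) (Ω : Set (Euc n)) (u : Euc n → ℝ) : Prop :=
  SmoothOnNhd n u Ωᶜ ∧
  (∀ x ∈ (closure Ω)ᶜ, lapl n u x = 0) ∧
  (∀ x ∈ frontier Ω, u x = 1) ∧
  Tendsto u (cocompact (Euc n)) (𝓝 0)

end

/-!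
Along a line `N + s v vᵀ` every `S_j` is affine in `s`, so Newton's inequalities
`S_j S_{j+2} ≤ S_{j+1}²`, applied for all `s`, force the slopes of `S_1, …, S_k` to be positive as
soon as `N` lies in the Gårding cone `Γ_k`. Hence `S_k` is strictly increasing on `Γ_k` in the
direction of positive semidefinite matrices, and `k`-convex subsolutions of `S_k(D²w) = 1` obey a
comparison principle.

With `Q x = ½ xᵀAx`, the function `ū` is such a subsolution, vanishes on `{Q = R₀}`, and satisfies
`ū ≤ Q + μ(α)`; increasing `α` makes it as large as desired on `{Q = R₀ + 1}`. For `c ≥ μ(α)` it is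
a lower barrier which forces `u^{ε₁} ≥ 0` near the hole. In particular `u^{ε₁} ≥ 0 = u^{ε₂}` on
`∂B_{ε₂}(x₀)`, and comparing the two solutions outside `B_{ε₂}(x₀)` gives the claim.
-/

section NewtonInequality

open Polynomial

lemma splits_derivative {p : ℝ[X]} (hp : p.Splits) : (derivative p).Splits := by
  rw [splits_iff_card_roots] at hp ⊢
  have := card_roots_le_derivative p
  have := natDegree_derivative_le p
  have := (derivative p).card_roots'
  omega

lemma splits_iterate_derivative {p : ℝ[X]} (hp : p.Splits) (k : ℕ) :
    (derivative^[k] p).Splits := by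
  induction k with
  | zero => exact hp
  | succ k ih => exact Function.iterate_succ_apply' derivative k p ▸ splits_derivative ih

lemma two_mul_coeff_zero_mul_coeff_two_le_sq {K : Type*} [Field K] [LinearOrder K]
    [IsStrictOrderedRing K] {p : K[X]} (hp : p.Splits) :
    2 * (p.coeff 0 * p.coeff 2) ≤ p.coeff 1 ^ 2 := by
  rw [hp.eq_prod_roots]
  induction p.roots using Multiset.induction_on with
  | empty => simp [coeff_C]
  | cons r s ih =>
    rw [Multiset.map_cons, Multiset.prod_cons, mul_left_comm (C p.leadingCoeff)]
    generalize C p.leadingCoeff * (s.map fun r => X - C r).prod = q at ih ⊢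
    simp only [sub_mul, coeff_sub, coeff_C_mul, coeff_X_mul, coeff_X_mul_zero]
    nlinarith [sq_nonneg (q.coeff 0), mul_nonneg (sq_nonneg r) (sub_nonneg.2 ih)]

lemma coeff_mul_coeff_add_two_le_sq {p : ℝ[X]} (hp : p.Splits) (k : ℕ) :
    p.coeff k * p.coeff (k + 2) ≤ p.coeff (k + 1) ^ 2 := by
  have factorial_one : ((k + 1).descFactorial k : ℝ) = (k + 1) * k.factorial := by
    have := Nat.factorial_mul_descFactorial (Nat.le_add_right k 1)
    rw [Nat.add_sub_cancel_left, Nat.factorial_one, one_mul, Nat.factorial_succ] at this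
    exact_mod_cast this
  have factorial_two :
      2 * ((k + 2).descFactorial k : ℝ) = (k + 2) * ((k + 1) * k.factorial) := by
    have := Nat.factorial_mul_descFactorial (Nat.le_add_right k 2)
    rw [Nat.add_sub_cancel_left, Nat.factorial_two, Nat.factorial_succ, Nat.factorial_succ] at this
    exact_mod_cast this
  have scaled := two_mul_coeff_zero_mul_coeff_two_le_sq (splits_iterate_derivative hp k)
  simp only [coeff_iterate_derivative, nsmul_eq_mul, zero_add, Nat.descFactorial_self,
    add_comm 1 k, add_comm 2 k, factorial_one] at scaled
  have newton : (k + 2) * (p.coeff k * p.coeff (k + 2)) ≤ (k + 1) * p.coeff (k + 1) ^ 2 := by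
    have hpos : (0 : ℝ) < k.factorial ^ 2 * (k + 1) := by positivity
    refine le_of_mul_le_mul_left ?_ hpos
    linear_combination scaled - k.factorial * p.coeff k * p.coeff (k + 2) * factorial_two
  nlinarith [sq_nonneg (p.coeff (k + 1)), (k.cast_nonneg : (0 : ℝ) ≤ k)]

end NewtonInequality

section RankOne

open Polynomial Matrix

lemma det_add_vecMulVec {R m : Type*} [CommRing R] [IsDomain R] [Fintype m] [DecidableEq m]
    {A : Matrix m m R} (hA : A.det ≠ 0) (u v : m → R) :
    (A + vecMulVec u v).det = A.det + v ⬝ᵥ A.adjugate *ᵥ u := by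
  let f := algebraMap R (FractionRing R)
  have hdet : f A.det ≠ 0 := (map_ne_zero_iff f (IsFractionRing.injective _ _)).2 hA
  have hmap : f.mapMatrix (A + vecMulVec u v) = f.mapMatrix A +
      replicateCol Unit (f ∘ u) * replicateRow Unit (f ∘ v) := by
    ext i j
    simp [vecMulVec_apply, Matrix.mul_apply]
  have hadj : replicateRow Unit (f ∘ v) * (f.mapMatrix A)⁻¹ * replicateCol Unit (f ∘ u) =
      of fun _ _ => (f A.det)⁻¹ * f (v ⬝ᵥ A.adjugate *ᵥ u) := by
    ext
    rw [Matrix.inv_def, ← RingHom.map_adjugate, ← RingHom.map_det, Ring.inverse_eq_inv',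
      Matrix.mul_smul, Matrix.smul_mul, Matrix.smul_apply, smul_eq_mul, Matrix.mul_assoc]
    congr 1
    simp [Matrix.mul_apply, dotProduct, mulVec]
  apply IsFractionRing.injective R (FractionRing R)
  change f _ = f _
  rw [RingHom.map_det, hmap, det_add_replicateCol_mul_replicateRow
    (RingHom.map_det f A ▸ IsUnit.mk0 _ hdet), hadj, ← RingHom.map_det]
  simp only [det_unique, Matrix.add_apply, one_apply_eq, of_apply, map_add]
  field_simp

lemma charpoly_add_vecMulVec {R m : Type*} [CommRing R] [IsDomain R] [Fintype m] [DecidableEq m]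
    (N : Matrix m m R) (u v : m → R) :
    (N + vecMulVec u v).charpoly =
      N.charpoly - (C ∘ v) ⬝ᵥ (charmatrix N).adjugate *ᵥ (C ∘ u) := by
  have hchar : charmatrix (N + vecMulVec u v) =
      charmatrix N + vecMulVec (-(C ∘ u)) (C ∘ v) := by
    ext1 i j
    simp only [charmatrix_apply, Matrix.add_apply, vecMulVec_apply, map_add, map_mul,
      Pi.neg_apply, Function.comp_apply]
    ring
  rw [charpoly, hchar, det_add_vecMulVec N.charpoly_monic.ne_zero, mulVec_neg, dotProduct_neg,
    ← sub_eq_add_neg, charpoly]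

variable {n j : ℕ}

/-- The derivative `∂S_j/∂N` of `S_j` at the matrix `N`, i.e. the linearised operator `S_j^{il}`
(a Newton transformation of `N`), read off from the adjugate of `X - N` because
`S_j(N) = (-1)^j [X^{n-j}] det(X - N)`. -/
noncomputable def newtonTensor (n j : ℕ) (N : Matrix (Fin n) (Fin n) ℝ) :
    Matrix (Fin n) (Fin n) ℝ :=
  of fun i l => (-1) ^ (j + 1) * ((charmatrix N).adjugate i l).coeff (n - j)

lemma matSk_add_vecMulVec (N : Matrix (Fin n) (Fin n) ℝ) (u v : Fin n → ℝ) :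
    matSk n j (N + vecMulVec u v) = matSk n j N + v ⬝ᵥ newtonTensor n j N *ᵥ u := by
  have hcoeff : v ⬝ᵥ newtonTensor n j N *ᵥ u =
      (-1) ^ (j + 1) * ((C ∘ v) ⬝ᵥ (charmatrix N).adjugate *ᵥ (C ∘ u)).coeff (n - j) := by
    simp only [dotProduct, mulVec, newtonTensor, of_apply, Function.comp_apply, finsetSum_coeff,
      coeff_C_mul, coeff_mul_C, Finset.mul_sum]
    refine Finset.sum_congr rfl fun i _ => Finset.sum_congr rfl fun l _ => ?_
    ring
  rw [hcoeff, matSk, matSk, charpoly_add_vecMulVec, coeff_sub]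
  ring

lemma matSk_add_smul_vecMulVec (N : Matrix (Fin n) (Fin n) ℝ) (v : Fin n → ℝ) (s : ℝ) :
    matSk n j (N + s • vecMulVec v v) =
      matSk n j N + s * (v ⬝ᵥ newtonTensor n j N *ᵥ v) := by
  rw [← smul_vecMulVec, matSk_add_vecMulVec, mulVec_smul, dotProduct_smul, smul_eq_mul]

lemma matSk_zero (N : Matrix (Fin n) (Fin n) ℝ) : matSk n 0 N = 1 := by
  have hlead := N.charpoly_monic.coeff_natDegree
  rw [charpoly_natDegree_eq_dim, Fintype.card_fin] at hlead
  rw [matSk, pow_zero, one_mul, Nat.sub_zero, hlead]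

lemma matSk_one [NeZero n] (N : Matrix (Fin n) (Fin n) ℝ) : matSk n 1 N = N.trace := by
  rw [trace_eq_neg_charpoly_coeff, matSk, pow_one, neg_one_mul, Fintype.card_fin]

lemma dotProduct_newtonTensor_zero_mulVec (N : Matrix (Fin n) (Fin n) ℝ) (u v : Fin n → ℝ) :
    v ⬝ᵥ newtonTensor n 0 N *ᵥ u = 0 := by
  have := matSk_add_vecMulVec (j := 0) N u v
  rwa [matSk_zero, matSk_zero, left_eq_add] at this

lemma dotProduct_newtonTensor_one_mulVec [NeZero n] (N : Matrix (Fin n) (Fin n) ℝ)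
    (u v : Fin n → ℝ) : v ⬝ᵥ newtonTensor n 1 N *ᵥ u = u ⬝ᵥ v := by
  have := matSk_add_vecMulVec (j := 1) N u v
  rwa [matSk_one, matSk_one, trace_add, trace_vecMulVec, add_right_inj, eq_comm] at this

lemma matSk_diagonal (hj : j ≤ n) (a : Fin n → ℝ) :
    matSk n j (diagonal a) = esymmVec n j a := by
  have hprod : (diagonal a).charpoly =
      ((Finset.univ.val.map a).map fun t => X - C t).prod := by
    rw [charpoly_diagonal, Multiset.map_map]
    rfl
  rw [matSk, hprod, Multiset.prod_X_sub_C_coeff _ (by simp), Multiset.card_map, Finset.card_val,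
    Finset.card_univ, Fintype.card_fin, Nat.sub_sub_self hj, Finset.esymm_map_val, ← mul_assoc,
    ← mul_pow, neg_one_mul, neg_neg, one_pow, one_mul, esymmVec]

lemma newtonTensor_diagonal (hj : j < n) (a : Fin n → ℝ) :
    newtonTensor n (j + 1) (diagonal a) =
      diagonal fun i => esymmVec n j (Function.update a i 0) := by
  have hchar : charmatrix (diagonal a) = diagonal fun i => X - C (a i) := by
    ext1 i l
    obtain rfl | hil := eq_or_ne i l
    · simp
    · simp [hil]
  ext i l
  rw [newtonTensor, hchar, adjugate_diagonal, of_apply]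
  obtain rfl | hil := eq_or_ne i l
  · have hcharpoly : (diagonal (Function.update a i 0)).charpoly =
        X * ∏ r ∈ Finset.univ.erase i, (X - C (a r)) := by
      rw [charpoly_diagonal, ← Finset.mul_prod_erase _ _ (Finset.mem_univ i),
        Function.update_self, C_0, sub_zero]
      congr 1
      refine Finset.prod_congr rfl fun r hr => ?_
      rw [Function.update_of_ne (Finset.ne_of_mem_erase hr)]
    rw [diagonal_apply_eq, diagonal_apply_eq, ← matSk_diagonal hj.le, matSk, hcharpoly,
      show n - j = n - (j + 1) + 1 by omega, coeff_X_mul]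
    ring
  · rw [diagonal_apply_ne _ hil, diagonal_apply_ne _ hil, coeff_zero, mul_zero]

end RankOne

section GardingCone

open Matrix

variable {n k : ℕ} {N P : Matrix (Fin n) (Fin n) ℝ} {v : Fin n → ℝ}

lemma matSk_mul_matSk_add_two_le_sq (hN : N.IsHermitian) {j : ℕ} (hj : j + 2 ≤ n) :
    matSk n j N * matSk n (j + 2) N ≤ matSk n (j + 1) N ^ 2 := by
  have newton := coeff_mul_coeff_add_two_le_sq hN.splits_charpoly (n - (j + 2))
  rw [show n - (j + 2) + 2 = n - j by omega,
    show n - (j + 2) + 1 = n - (j + 1) by omega] at newton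
  have sign_sq : ((-1 : ℝ) ^ j) ^ 2 = 1 := by rw [← pow_mul, mul_comm, pow_mul, neg_one_sq, one_pow]
  simp only [matSk, pow_succ _ j, pow_succ _ (j + 1)]
  linear_combination newton + (N.charpoly.coeff (n - j) * N.charpoly.coeff (n - (j + 2)) -
    N.charpoly.coeff (n - (j + 1)) ^ 2) * sign_sq

lemma pos_and_mul_lt_mul_of_forall_mul_le_sq {A₀ A₁ A₂ B₀ B₁ B₂ : ℝ} (hA₁ : 0 < A₁)
    (hA₂ : 0 < A₂) (hB₁ : 0 < B₁) (hlt : A₁ * B₀ < A₀ * B₁)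
    (hN : ∀ s : ℝ, (A₀ + s * B₀) * (A₂ + s * B₂) ≤ (A₁ + s * B₁) ^ 2) :
    0 < B₂ ∧ A₂ * B₁ < A₁ * B₂ := by
  set F := A₀ * B₁ - A₁ * B₀
  have hF_pos : 0 < F := sub_pos.2 hlt
  have shifted (t : ℝ) : (F + t * B₀) * (A₂ * B₁ - A₁ * B₂ + t * B₂) ≤ (t * B₁) ^ 2 := by
    have scaled := mul_le_mul_of_nonneg_left (hN ((t - A₁) / B₁)) (sq_nonneg B₁)
    calc _ = B₁ ^ 2 * ((A₀ + (t - A₁) / B₁ * B₀) * (A₂ + (t - A₁) / B₁ * B₂)) := by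
          field_simp
          ring
      _ ≤ _ := scaled
      _ = _ := by
          field_simp
          ring
  have hle : A₂ * B₁ ≤ A₁ * B₂ := by
    have at_zero := shifted 0
    simp only [zero_mul, add_zero, ne_eq, OfNat.ofNat_ne_zero, not_false_eq_true,
      zero_pow] at at_zero
    exact sub_nonpos.1 (nonpos_of_mul_nonpos_right at_zero hF_pos)
  have hB₂ : 0 < B₂ := pos_of_mul_pos_right ((mul_pos hA₂ hB₁).trans_le hle) hA₁.le
  refine ⟨hB₂, hle.lt_of_ne fun heq => ?_⟩
  have nonneg_quadratic (t : ℝ) : 0 ≤ (B₁ ^ 2 - B₀ * B₂) * (t * t) + -(F * B₂) * t + 0 := by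
    have := shifted t
    rw [heq, sub_self, zero_add] at this
    linarith
  have := discrim_le_zero nonneg_quadratic
  rw [discrim] at this
  nlinarith [mul_pos hF_pos hB₂]

/-- The Gårding cone `Γ_k` of symmetric matrices: `S_j(N) > 0` for all `j ≤ k`. The index `j = 0`,
where `S_0 = 1`, is included so that quotients of consecutive `S_j` can be compared from `j = 0`
on. -/
structure MemGarding (n k : ℕ) (N : Matrix (Fin n) (Fin n) ℝ) : Prop where
  isHermitian : N.IsHermitian
  matSk_pos : ∀ j ≤ k, 0 < matSk n j N

lemma isHermitian_add_smul_vecMulVec (hN : N.IsHermitian) (v : Fin n → ℝ) (s : ℝ) :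
    (N + s • vecMulVec v v).IsHermitian :=
  hN.add (.smul (posSemidef_vecMulVec_self_star v).isHermitian (.all s))

namespace MemGarding

lemma newtonTensor_pos_and_lt (hN : MemGarding n k N) (hkn : k ≤ n) (hv : v ≠ 0) {j : ℕ}
    (hj : j < k) :
    0 < v ⬝ᵥ newtonTensor n (j + 1) N *ᵥ v ∧
      matSk n (j + 1) N * (v ⬝ᵥ newtonTensor n j N *ᵥ v) <
        matSk n j N * (v ⬝ᵥ newtonTensor n (j + 1) N *ᵥ v) := by
  have : NeZero n := ⟨by omega⟩
  induction j with
  | zero =>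
    have hpos : 0 < v ⬝ᵥ newtonTensor n 1 N *ᵥ v := by
      rw [dotProduct_newtonTensor_one_mulVec]
      simpa only [star_trivial] using dotProduct_star_self_pos_iff.2 hv
    refine ⟨hpos, ?_⟩
    rwa [dotProduct_newtonTensor_zero_mulVec, mul_zero, matSk_zero, one_mul]
  | succ j ih =>
    obtain ⟨hpos, hlt⟩ := ih (by omega)
    refine pos_and_mul_lt_mul_of_forall_mul_le_sq (hN.matSk_pos _ (by omega))
      (hN.matSk_pos _ (by omega)) hpos hlt fun s => ?_
    simpa only [matSk_add_smul_vecMulVec] using matSk_mul_matSk_add_two_le_sq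
      (isHermitian_add_smul_vecMulVec hN.isHermitian v s) (by omega : j + 2 ≤ n)

lemma newtonTensor_pos (hN : MemGarding n k N) (hkn : k ≤ n) (hv : v ≠ 0) {j : ℕ} (hj : 1 ≤ j)
    (hjk : j ≤ k) : 0 < v ⬝ᵥ newtonTensor n j N *ᵥ v := by
  obtain ⟨i, rfl⟩ := Nat.exists_eq_add_of_le' hj
  exact (hN.newtonTensor_pos_and_lt hkn hv hjk).1

lemma matSk_lt_matSk_add_vecMulVec (hN : MemGarding n k N) (hk : 1 ≤ k) (hkn : k ≤ n)
    (hv : v ≠ 0) : matSk n k N < matSk n k (N + vecMulVec v v) := by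
  rw [matSk_add_vecMulVec]
  exact lt_add_of_pos_right _ (hN.newtonTensor_pos hkn hv hk le_rfl)

lemma add_vecMulVec (hN : MemGarding n k N) (hkn : k ≤ n) (v : Fin n → ℝ) :
    MemGarding n k (N + vecMulVec v v) := by
  obtain rfl | hv := eq_or_ne v 0
  · rwa [zero_vecMulVec, add_zero]
  refine ⟨by simpa only [one_smul] using isHermitian_add_smul_vecMulVec hN.isHermitian v 1,
    fun j hj => ?_⟩
  obtain rfl | hj₀ := j.eq_zero_or_pos
  · rw [matSk_zero]
    exact one_pos
  rw [matSk_add_vecMulVec]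
  exact add_pos (hN.matSk_pos j hj) (hN.newtonTensor_pos hkn hv hj₀ hj)

lemma add_sum_vecMulVec (hN : MemGarding n k N) (hk : 1 ≤ k) (hkn : k ≤ n) {ι : Type*}
    (s : Finset ι) (v : ι → Fin n → ℝ) :
    MemGarding n k (N + ∑ i ∈ s, vecMulVec (v i) (v i)) ∧
      matSk n k N ≤ matSk n k (N + ∑ i ∈ s, vecMulVec (v i) (v i)) := by
  induction s using Finset.induction_on with
  | empty => simpa using hN
  | insert i s hi ih =>
    obtain ⟨hmem, hle⟩ := ih
    rw [Finset.sum_insert hi, add_comm (vecMulVec _ _), ← add_assoc]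
    refine ⟨hmem.add_vecMulVec hkn (v i), hle.trans ?_⟩
    obtain hv | hv := eq_or_ne (v i) 0
    · rw [hv, zero_vecMulVec, add_zero]
    · exact (hmem.matSk_lt_matSk_add_vecMulVec hk hkn hv).le

theorem matSk_lt_matSk_add (hN : MemGarding n k N) (hk : 1 ≤ k) (hkn : k ≤ n)
    (hP : P.PosSemidef) (hP₀ : P ≠ 0) : matSk n k N < matSk n k (N + P) := by
  obtain ⟨m, v, rfl⟩ := posSemidef_iff_eq_sum_vecMulVec.1 hP
  obtain ⟨i, hi⟩ : ∃ i, v i ≠ 0 := by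
    by_contra! h
    exact hP₀ (by simp [h])
  simp only [star_trivial]
  rw [← Finset.add_sum_erase _ _ (Finset.mem_univ i), ← add_assoc]
  exact (hN.matSk_lt_matSk_add_vecMulVec hk hkn hi).trans_le
    ((hN.add_vecMulVec hkn (v i)).add_sum_vecMulVec hk hkn _ v).2

/-- Subtracting a rank-one matrix decreases the quotients `S_{j+1} / S_j`, so `S_k` is the first of
the `S_j` to vanish. -/
lemma add_smul_vecMulVec_of_nonpos (hN : MemGarding n k N) (hkn : k ≤ n) {s : ℝ} (hs : s ≤ 0)
    (hpos : 0 < matSk n k (N + s • vecMulVec v v)) : MemGarding n k (N + s • vecMulVec v v) := by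
  obtain rfl | hv := eq_or_ne v 0
  · rwa [zero_vecMulVec, smul_zero, add_zero]
  refine ⟨isHermitian_add_smul_vecMulVec hN.isHermitian v s, fun j hj => ?_⟩
  induction hj using Nat.decreasingInduction with
  | self => exact hpos
  | of_succ j hj ih =>
    rw [matSk_add_smul_vecMulVec] at ih ⊢
    have hA₀ := hN.matSk_pos j hj.le
    have hA₁ := hN.matSk_pos (j + 1) hj
    have hlt := (hN.newtonTensor_pos_and_lt hkn hv hj).2
    refine pos_of_mul_pos_right ?_ hA₁.le
    nlinarith [mul_pos hA₀ ih]

end MemGarding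

end GardingCone

section Diagonal

open Matrix

variable {n j k : ℕ} {a : Fin n → ℝ}

lemma esymmVec_zero (a : Fin n → ℝ) : esymmVec n 0 a = 1 := by
  simp [esymmVec]

lemma esymmVec_one (n j : ℕ) : esymmVec n j 1 = n.choose j := by
  simp [esymmVec]

lemma esymmVec_smul (g : ℝ) (a : Fin n → ℝ) : esymmVec n j (g • a) = g ^ j * esymmVec n j a := by
  simp only [esymmVec, Pi.smul_apply, smul_eq_mul, Finset.mul_sum, Finset.prod_mul_distrib,
    Finset.prod_const]
  exact Finset.sum_congr rfl fun s hs => by rw [(Finset.mem_powersetCard.1 hs).2]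

lemma esymmVec_nonneg (ha : ∀ i, 0 ≤ a i) : 0 ≤ esymmVec n j a :=
  Finset.sum_nonneg fun _ _ => Finset.prod_nonneg fun i _ => ha i

lemma esymmVec_pos (ha : ∀ i, 0 < a i) (hj : j ≤ n) : 0 < esymmVec n j a :=
  Finset.sum_pos (fun _ _ => Finset.prod_pos fun i _ => ha i)
    (Finset.powersetCard_nonempty.2 (by simpa using hj))

lemma update_zero_nonneg (ha : ∀ i, 0 < a i) (i l : Fin n) : 0 ≤ Function.update a i 0 l := by
  obtain rfl | hl := eq_or_ne l i
  · rw [Function.update_self]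
  · rw [Function.update_of_ne hl]
    exact (ha l).le

lemma esymmVec_update_zero_pos (ha : ∀ i, 0 < a i) (hj : j < n) (i : Fin n) :
    0 < esymmVec n j (Function.update a i 0) := by
  obtain ⟨s, hs, hcard⟩ := Finset.exists_subset_card_eq (s := Finset.univ.erase i) (n := j)
    (by rw [Finset.card_erase_of_mem (Finset.mem_univ i), Finset.card_univ, Fintype.card_fin]
        omega)
  refine Finset.sum_pos' (fun t _ => Finset.prod_nonneg fun l _ => update_zero_nonneg ha i l)
    ⟨s, Finset.mem_powersetCard.2 ⟨Finset.subset_univ s, hcard⟩, Finset.prod_pos fun l hl => ?_⟩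
  rw [Function.update_of_ne (Finset.ne_of_mem_erase (hs hl))]
  exact ha l

lemma dotProduct_newtonTensor_diagonal_mulVec (hj : j < n) (a v : Fin n → ℝ) :
    v ⬝ᵥ newtonTensor n (j + 1) (diagonal a) *ᵥ v =
      ∑ i, v i ^ 2 * esymmVec n j (Function.update a i 0) := by
  simp only [newtonTensor_diagonal hj, dotProduct, mulVec_diagonal]
  exact Finset.sum_congr rfl fun i _ => by ring

lemma esymmVec_succ_eq_update_zero_add (hj : j < n) (a : Fin n → ℝ) (i : Fin n) :
    esymmVec n (j + 1) a =
      esymmVec n (j + 1) (Function.update a i 0) +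
        esymmVec n j (Function.update a i 0) * a i := by
  have hsplit : diagonal a =
      diagonal (Function.update a i 0) + a i • vecMulVec (Pi.single i 1) (Pi.single i 1) := by
    rw [← single_eq_single_vecMulVec_single, ← diagonal_single, ← diagonal_smul, diagonal_add]
    congr 1
    ext l
    obtain rfl | hl := eq_or_ne l i
    · simp
    · simp [hl]
  rw [← matSk_diagonal hj, hsplit, matSk_add_smul_vecMulVec, matSk_diagonal hj,
    dotProduct_newtonTensor_diagonal_mulVec hj, Finset.sum_eq_single_of_mem i (Finset.mem_univ i)
      fun l _ hl => by simp [hl]]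
  rw [Pi.single_eq_same, one_pow, one_mul, Function.update_idem, mul_comm]

lemma memGarding_diagonal (ha : ∀ i, 0 < a i) (hkn : k ≤ n) : MemGarding n k (diagonal a) :=
  ⟨isHermitian_diagonal a, fun j hj => by
    rw [matSk_diagonal (hj.trans hkn)]
    exact esymmVec_pos ha (hj.trans hkn)⟩

lemma MemA.diagonal_pos (hA : MemA n k (diagonal a)) (i : Fin n) : 0 < a i :=
  posDef_diagonal_iff.1 hA.2.1 i

lemma MemA.esymmVec_eq_one (hA : MemA n k (diagonal a)) (hkn : k ≤ n) : esymmVec n k a = 1 := by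
  rw [← matSk_diagonal hkn, hA.2.2]

lemma esymmVec_mul_le_hkfun (k : ℕ) (a : Fin n → ℝ) (i : Fin n) :
    esymmVec n (k - 1) (Function.update a i 0) * a i ≤ hkfun n k a :=
  le_ciSup (f := fun i => esymmVec n (k - 1) (Function.update a i 0) * a i)
    (Set.finite_range _).bddAbove i

lemma hkfun_pos (hk : 1 ≤ k) (hkn : k ≤ n) (ha : ∀ i, 0 < a i) : 0 < hkfun n k a :=
  (mul_pos (esymmVec_update_zero_pos ha (by omega) ⟨0, by omega⟩) (ha _)).trans_le
    (esymmVec_mul_le_hkfun k a _)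

lemma two_mul_hkfun_lt (hn : 3 ≤ n) (hk : 1 ≤ k) (hkn : k ≤ n) (hA : MemA n k (diagonal a))
    (hk₁ : k = 1 → (⨆ i, a i) < 1 / 2) : 2 * hkfun n k a < k := by
  have : Nonempty (Fin n) := ⟨⟨0, by omega⟩⟩
  obtain ⟨i, hi⟩ := exists_eq_ciSup_of_finite
    (f := fun i => esymmVec n (k - 1) (Function.update a i 0) * a i)
  rw [hkfun, ← hi]
  obtain ⟨j, rfl⟩ := Nat.exists_eq_add_of_le' hk
  have hsum := (esymmVec_succ_eq_update_zero_add hkn a i).symm.trans (hA.esymmVec_eq_one hkn)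
  obtain rfl | rfl | hj : j = 0 ∨ j = 1 ∨ 2 ≤ j := by omega
  · have := hk₁ rfl
    have := le_ciSup (Set.finite_range a).bddAbove i
    norm_num [esymmVec_zero]
    linarith
  · have := esymmVec_update_zero_pos hA.diagonal_pos (show 2 < n by omega) i
    norm_num
    linarith
  · have := esymmVec_nonneg (j := j + 1) (update_zero_nonneg hA.diagonal_pos i)
    have : (2 : ℝ) ≤ j := by exact_mod_cast hj
    rw [Nat.add_sub_cancel]
    push_cast
    linarith

/-- For a function `w = G ∘ Q` with `Q x = ½ xᵀ diag(a) x` the left-hand side bounds `S_k(D²w)` from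
below, where `g = G'`, `g' = G''`. -/
lemma le_matSk_diagonal_add_smul_vecMulVec (hk : 1 ≤ k) (hkn : k ≤ n) (ha : ∀ i, 0 < a i)
    {g g' : ℝ} (hg : 0 ≤ g) (hg' : g' ≤ 0) (p : Fin n → ℝ) :
    g ^ k * esymmVec n k a + hkfun n k a * (∑ i, a i * p i ^ 2) * (g' * g ^ (k - 1)) ≤
      matSk n k (diagonal (g • a) + g' • vecMulVec (a * p) (a * p)) := by
  obtain ⟨j, rfl⟩ := Nat.exists_eq_add_of_le' hk
  rw [matSk_add_smul_vecMulVec, matSk_diagonal hkn, esymmVec_smul,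
    dotProduct_newtonTensor_diagonal_mulVec hkn, Nat.add_sub_cancel]
  have hupdate (i : Fin n) : Function.update (g • a) i 0 = g • Function.update a i 0 := by
    simpa using Function.update_smul g a i 0
  have hquad : ∑ i, (a * p) i ^ 2 * esymmVec n j (Function.update a i 0) ≤
      hkfun n (j + 1) a * ∑ i, a i * p i ^ 2 := by
    rw [Finset.mul_sum]
    refine Finset.sum_le_sum fun i _ => ?_
    calc (a * p) i ^ 2 * esymmVec n j (Function.update a i 0)
        = esymmVec n j (Function.update a i 0) * a i * (a i * p i ^ 2) := by
          rw [Pi.mul_apply]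
          ring
      _ ≤ _ := mul_le_mul_of_nonneg_right (esymmVec_mul_le_hkfun (j + 1) a i)
          (mul_nonneg (ha i).le (sq_nonneg _))
  simp only [hupdate, esymmVec_smul, mul_left_comm _ (g ^ j), ← Finset.mul_sum]
  have := mul_le_mul_of_nonpos_right hquad (mul_nonpos_of_nonpos_of_nonneg hg' (pow_nonneg hg j))
  linarith

end Diagonal

section SecondDirectionalDerivative

variable {E : Type*} [NormedAddCommGroup E] [NormedSpace ℝ E] {w z : E → ℝ} {p v : E} {l m : ℝ}

/-- The second derivative of `w` at `p` in the direction `v` is `l`. Unlike an equation for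
`iteratedDeriv 2` this includes the differentiability of `t ↦ w (p + t v)` near `0` and of its
derivative at `0`. -/
def HasSecondDirDerivAt (w : E → ℝ) (p v : E) (l : ℝ) : Prop :=
  ∃ φ' : ℝ → ℝ, (∀ᶠ t in 𝓝 0, HasDerivAt (fun t : ℝ => w (p + t • v)) (φ' t) t) ∧
    HasDerivAt φ' l 0

lemma hasDerivAt_add_smul (p v : E) (t : ℝ) : HasDerivAt (fun t : ℝ => p + t • v) v t := by
  simpa using ((hasDerivAt_id t).smul_const v).const_add p

lemma tendsto_add_smul_nhds_zero (p v : E) : Tendsto (fun t : ℝ => p + t • v) (𝓝 0) (𝓝 p) := by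
  simpa using (hasDerivAt_add_smul p v 0).continuousAt.tendsto

lemma hasDerivAt_quadratic (A B C t : ℝ) :
    HasDerivAt (fun t => A + B * t + C * t ^ 2) (B + 2 * C * t) t := by
  refine ((((hasDerivAt_id' t).const_mul B).const_add A).fun_add
    ((hasDerivAt_pow 2 t).const_mul C)).congr_deriv ?_
  push_cast
  ring

namespace HasSecondDirDerivAt

lemma sub (hw : HasSecondDirDerivAt w p v l) (hz : HasSecondDirDerivAt z p v m) :
    HasSecondDirDerivAt (fun x => w x - z x) p v (l - m) := by
  obtain ⟨φ', hφ, hφ'⟩ := hw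
  obtain ⟨ψ', hψ, hψ'⟩ := hz
  exact ⟨fun t => φ' t - ψ' t, hφ.and hψ |>.mono fun t ht => ht.1.fun_sub ht.2, hφ'.fun_sub hψ'⟩

lemma add_const (hw : HasSecondDirDerivAt w p v l) (c : ℝ) :
    HasSecondDirDerivAt (fun x => w x + c) p v l := by
  obtain ⟨φ', hφ, hφ'⟩ := hw
  exact ⟨φ', hφ.mono fun t ht => ht.add_const c, hφ'⟩

lemma comp_of_quadratic {A B C : ℝ} (hw : ∀ t : ℝ, w (p + t • v) = A + B * t + C * t ^ 2)
    {f g : ℝ → ℝ} {g' : ℝ} (hf : ∀ᶠ s in 𝓝 A, HasDerivAt f (g s) s) (hg : HasDerivAt g g' A) :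
    HasSecondDirDerivAt (fun x => f (w x)) p v (g' * B ^ 2 + g A * (2 * C)) := by
  set q : ℝ → ℝ := fun t => A + B * t + C * t ^ 2
  have hq₀ : q 0 = A := by simp [q]
  have hq (t : ℝ) : HasDerivAt q (B + 2 * C * t) t := hasDerivAt_quadratic A B C t
  have hq' : HasDerivAt (fun t => B + 2 * C * t) (2 * C) 0 := by
    simpa using ((hasDerivAt_id (0 : ℝ)).const_mul (2 * C)).const_add B
  have hq_tendsto : Tendsto q (𝓝 0) (𝓝 A) := hq₀ ▸ (hq 0).continuousAt.tendsto
  refine ⟨fun t => g (q t) * (B + 2 * C * t), ?_, ?_⟩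
  · simp only [hw]
    exact (hq_tendsto.eventually hf).mono fun t ht => ht.comp t (hq t)
  · have hgq : HasDerivAt (fun t => g (q t)) (g' * (B + 2 * C * 0)) 0 :=
      HasDerivAt.comp 0 (hq₀.symm ▸ hg) (hq 0)
    refine (hgq.fun_mul hq').congr_deriv ?_
    rw [hq₀]
    ring

lemma of_quadratic {A B C : ℝ} (hw : ∀ t : ℝ, w (p + t • v) = A + B * t + C * t ^ 2) :
    HasSecondDirDerivAt w p v (2 * C) := by
  simpa using comp_of_quadratic (f := id) hw (.of_forall hasDerivAt_id) (hasDerivAt_const A 1)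

lemma nonneg_of_isLocalMin (hw : HasSecondDirDerivAt w p v l) (hmin : IsLocalMin w p) : 0 ≤ l := by
  obtain ⟨φ', hφ, hφ'⟩ := hw
  set φ : ℝ → ℝ := fun t => w (p + t • v)
  have hφ_min : IsLocalMin φ 0 :=
    IsLocalMin.comp_continuous (g := fun t : ℝ => p + t • v) (by simpa using hmin)
      (hasDerivAt_add_smul p v 0).continuousAt
  have hderiv : deriv φ =ᶠ[𝓝 0] φ' := hφ.mono fun t ht => ht.deriv
  by_contra! hl
  have hφ_max : IsLocalMax φ 0 :=
    isLocalMax_of_deriv_deriv_neg (by rwa [hderiv.deriv_eq, hφ'.deriv]) hφ_min.deriv_eq_zero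
      hφ.self_of_nhds.continuousAt
  have hconst : φ =ᶠ[𝓝 0] fun _ => φ 0 := by
    filter_upwards [hφ_min, hφ_max] with t h₁ h₂ using le_antisymm h₂ h₁
  have hφ'_zero : φ' =ᶠ[𝓝 0] fun _ => 0 := by
    filter_upwards [hderiv, hconst.deriv] with t h₁ h₂
    rw [← h₁, h₂, deriv_const]
  exact hl.ne (hφ'.unique ((hasDerivAt_const 0 0).congr_of_eventuallyEq hφ'_zero))

end HasSecondDirDerivAt

lemma hasSecondDirDerivAt_fderiv_fderiv (hw : ContDiffAt ℝ 2 w p) (v : E) :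
    HasSecondDirDerivAt w p v (fderiv ℝ (fderiv ℝ w) p v v) := by
  refine ⟨fun t => fderiv ℝ w (p + t • v) v, ?_, ?_⟩
  · filter_upwards [(tendsto_add_smul_nhds_zero p v).eventually (hw.eventually (by simp))] with t ht
    exact (ht.differentiableAt (by simp)).hasFDerivAt.comp_hasDerivAt t (hasDerivAt_add_smul p v t)
  · have hfderiv : HasFDerivAt (fderiv ℝ w) (fderiv ℝ (fderiv ℝ w) p) (p + (0 : ℝ) • v) := by
      simpa using ((hw.fderiv_right (m := 1) (by norm_num)).differentiableAt (by simp)).hasFDerivAt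
    exact (ContinuousLinearMap.apply ℝ ℝ v).hasFDerivAt.comp_hasDerivAt 0
      (hfderiv.comp_hasDerivAt 0 (hasDerivAt_add_smul p v 0))

end SecondDirectionalDerivative

section Comparison

open Matrix

variable {n k : ℕ} {u w : Euc n → ℝ} {p : Euc n}

lemma hessMat_apply (u : Euc n → ℝ) (p : Euc n) (i j : Fin n) :
    hessMat n u p i j = fderiv ℝ (fderiv ℝ u) p (ebasis n i) (ebasis n j) := by
  simp [hessMat, iteratedFDeriv_two_apply]

lemma dotProduct_hessMat_mulVec (u : Euc n → ℝ) (p v : Euc n) :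
    v.ofLp ⬝ᵥ hessMat n u p *ᵥ v.ofLp = fderiv ℝ (fderiv ℝ u) p v v := by
  have hv : v = ∑ i, v i • ebasis n i := by
    ext j
    simp [ebasis, Pi.single_apply]
  conv_rhs => rw [hv]
  simp only [map_sum, map_smul, _root_.sum_apply, _root_.smul_apply, dotProduct, mulVec,
    hessMat_apply, smul_eq_mul, Finset.mul_sum]
  rw [Finset.sum_comm]
  exact Finset.sum_congr rfl fun i _ => Finset.sum_congr rfl fun j _ => by ring

lemma isHermitian_hessMat (hu : ContDiffAt ℝ 2 u p) : (hessMat n u p).IsHermitian := by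
  ext i j
  rw [conjTranspose_apply, star_trivial, hessMat_apply, hessMat_apply]
  exact (hu.isSymmSndFDerivAt (by simp)).eq _ _

/-- Pointwise `k`-convex subsolutions of `S_k(D²w) = 1`. The matrix `N` plays the role of the
Hessian `D²w(p)`, of which only the second directional derivatives enter the maximum principle. -/
def IsSubsolAt (n k : ℕ) (w : Euc n → ℝ) (p : Euc n) : Prop :=
  ∃ N : Matrix (Fin n) (Fin n) ℝ, MemGarding n k N ∧ 1 ≤ matSk n k N ∧
    ∀ v : Euc n, HasSecondDirDerivAt w p v (v.ofLp ⬝ᵥ N *ᵥ v.ofLp)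

lemma IsSubsolAt.add_const (hw : IsSubsolAt n k w p) (c : ℝ) :
    IsSubsolAt n k (fun x => w x + c) p := by
  obtain ⟨N, hN, hN₁, hwN⟩ := hw
  exact ⟨N, hN, hN₁, fun v => (hwN v).add_const c⟩

lemma isSubsolAt_of_one_le_skHess {U : Set (Euc n)} (hu : ContDiffAt ℝ 2 u p)
    (hconv : KConvexOn n k u U) (hp : p ∈ U) (hS : 1 ≤ SkHess n k u p) : IsSubsolAt n k u p := by
  refine ⟨hessMat n u p, ⟨isHermitian_hessMat hu, fun j hj => ?_⟩, hS, fun v => ?_⟩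
  · obtain rfl | hj₀ := j.eq_zero_or_pos
    · rw [matSk_zero]
      exact one_pos
    · exact hconv p hp j hj₀ hj
  · rw [dotProduct_hessMat_mulVec]
    exact hasSecondDirDerivAt_fderiv_fderiv hu v

lemma norm_add_smul_sq {F : Type*} [NormedAddCommGroup F] [InnerProductSpace ℝ F] (p v : F)
    (t : ℝ) : ‖p + t • v‖ ^ 2 = ‖p‖ ^ 2 + 2 * inner ℝ p v * t + ‖v‖ ^ 2 * t ^ 2 := by
  rw [norm_add_sq_real, norm_smul, inner_smul_right, mul_pow, Real.norm_eq_abs, sq_abs]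
  ring

lemma hasSecondDirDerivAt_mul_norm_sub_sq {F : Type*} [NormedAddCommGroup F]
    [InnerProductSpace ℝ F] (δ : ℝ) (x₀ p v : F) :
    HasSecondDirDerivAt (fun x => δ * ‖x - x₀‖ ^ 2) p v (2 * (δ * ‖v‖ ^ 2)) :=
  .of_quadratic (A := δ * ‖p - x₀‖ ^ 2) (B := δ * (2 * inner ℝ (p - x₀) v)) fun t => by
    rw [add_sub_right_comm, norm_add_smul_sq]
    ring

lemma isSubsolAt_half_norm_sub_sq (hkn : k ≤ n) (x₀ p : Euc n) :
    IsSubsolAt n k (fun x => 1 / 2 * ‖x - x₀‖ ^ 2) p := by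
  refine ⟨diagonal 1, memGarding_diagonal (fun _ => one_pos) hkn, ?_, fun v => ?_⟩
  · rw [matSk_diagonal hkn, esymmVec_one]
    exact_mod_cast Nat.choose_pos hkn
  · have hnorm : v.ofLp ⬝ᵥ diagonal 1 *ᵥ v.ofLp = 2 * (1 / 2 * ‖v‖ ^ 2) := by
      rw [EuclideanSpace.real_norm_sq_eq, dotProduct]
      simp only [mulVec_diagonal, Pi.one_apply, one_mul, ← sq]
      ring
    rw [hnorm]
    exact hasSecondDirDerivAt_mul_norm_sub_sq _ x₀ p v

lemma IsSubsolAt.not_isLocalMin_sub (hw : IsSubsolAt n k w p) (hk : 1 ≤ k) (hkn : k ≤ n)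
    (hu : ContDiffAt ℝ 2 u p) (hS : SkHess n k u p ≤ 1) {δ : ℝ} (hδ : 0 < δ) (x₀ : Euc n) :
    ¬ IsLocalMin (fun x => u x - w x - δ * ‖x - x₀‖ ^ 2) p := by
  intro hmin
  obtain ⟨N, hN, hN₁, hwN⟩ := hw
  have hP : (hessMat n u p - N).PosDef := by
    refine .of_dotProduct_mulVec_pos ((isHermitian_hessMat hu).sub hN.isHermitian) fun v hv => ?_
    have hnonneg := ((hasSecondDirDerivAt_fderiv_fderiv hu (WithLp.toLp 2 v)).sub (hwN _)).sub
      (hasSecondDirDerivAt_mul_norm_sub_sq δ x₀ p _) |>.nonneg_of_isLocalMin hmin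
    rw [← dotProduct_hessMat_mulVec, ← dotProduct_sub, ← sub_mulVec, sub_nonneg] at hnonneg
    have hv_norm : 0 < ‖WithLp.toLp 2 v‖ := norm_pos_iff.2 ((WithLp.toLp_eq_zero 2).not.2 hv)
    rw [star_trivial]
    exact hnonneg.trans_lt' (by positivity)
  have : Nonempty (Fin n) := ⟨⟨0, by omega⟩⟩
  have hlt := hN.matSk_lt_matSk_add hk hkn hP.posSemidef (by rintro h; simpa [h] using hP.det_pos)
  rw [add_sub_cancel] at hlt
  exact (hN₁.trans_lt hlt).not_ge hS

/-- At an interior point where `u - w` is negative and minimal, perturbing by a small multiple of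
`‖x‖²` would make `D²u` larger than `D²w`, contradicting `S_k(D²u) ≤ 1 ≤ S_k(D²w)`. -/
lemma le_on_isCompact_of_isSubsolAt (hk : 1 ≤ k) (hkn : k ≤ n) {K O : Set (Euc n)}
    (hK : IsCompact K) (hO : IsOpen O) (hOK : O ⊆ K) (hu : ContinuousOn u K)
    (hw : ContinuousOn w K) (hu₂ : ∀ p ∈ O, ContDiffAt ℝ 2 u p) (huS : ∀ p ∈ O, SkHess n k u p ≤ 1)
    (hwS : ∀ p ∈ O, IsSubsolAt n k w p) (hbdry : ∀ x ∈ K \ O, w x ≤ u x) :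
    ∀ x ∈ K, w x ≤ u x := by
  intro x hx
  by_contra! hlt
  obtain ⟨R, hR⟩ := hK.isBounded.exists_norm_le
  obtain ⟨δ, hδ, hδR⟩ : ∃ δ > 0, δ * R ^ 2 < w x - u x := by
    refine ⟨(w x - u x) / (R ^ 2 + 1), div_pos (sub_pos.2 hlt) (by positivity), ?_⟩
    rw [div_mul_eq_mul_div, div_lt_iff₀ (by positivity)]
    linarith
  obtain ⟨p, hpK, hmin⟩ := hK.exists_isMinOn ⟨x, hx⟩
    (f := fun y => u y - w y - δ * ‖y - 0‖ ^ 2) (by fun_prop)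
  by_cases hpO : p ∈ O
  · exact (hwS p hpO).not_isLocalMin_sub hk hkn (hu₂ p hpO) (huS p hpO) hδ 0
      (hmin.isLocalMin (mem_of_superset (hO.mem_nhds hpO) hOK))
  · have hle : u p - w p - δ * ‖p - 0‖ ^ 2 ≤ u x - w x - δ * ‖x - 0‖ ^ 2 := hmin hx
    simp only [sub_zero] at hle
    have hp : δ * ‖p‖ ^ 2 ≤ δ * R ^ 2 := by
      gcongr
      exact hR p hpK
    have : 0 ≤ δ * ‖x‖ ^ 2 := by positivity
    linarith [hbdry p ⟨hpK, hpO⟩]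

theorem le_of_isSubsolAt (hk : 1 ≤ k) (hkn : k ≤ n) {F O : Set (Euc n)} (hF : IsClosed F)
    (hO : IsOpen O) (hOF : O ⊆ F) (hu : ContinuousOn u F) (hw : ContinuousOn w F)
    (hu₂ : ∀ p ∈ O, ContDiffAt ℝ 2 u p) (huS : ∀ p ∈ O, SkHess n k u p ≤ 1)
    (hwS : ∀ p ∈ O, IsSubsolAt n k w p) (hbdry : ∀ x ∈ F \ O, w x ≤ u x)
    (hinfty : ∀ η > 0, ∀ᶠ x in cocompact (Euc n), x ∈ F → w x ≤ u x + η) :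
    ∀ x ∈ F, w x ≤ u x := by
  refine fun x hx => le_of_forall_pos_le_add fun η hη => ?_
  have hη' := hinfty η hη
  rw [← Metric.cobounded_eq_cocompact] at hη'
  obtain ⟨R, -, hR⟩ := hasBasis_cobounded_norm.eventually_iff.1 hη'
  obtain hxR | hxR := le_total R ‖x‖
  · exact hR hxR hx
  rw [← sub_le_iff_le_add, sub_eq_add_neg]
  refine le_on_isCompact_of_isSubsolAt (w := fun y => w y + -η) hk hkn
    ((isCompact_closedBall 0 R).inter_left hF) (hO.inter Metric.isOpen_ball)
    (Set.inter_subset_inter hOF Metric.ball_subset_closedBall)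
    (hu.mono Set.inter_subset_left) ((hw.mono Set.inter_subset_left).add continuousOn_const)
    (fun p hp => hu₂ p hp.1) (fun p hp => huS p hp.1) (fun p hp => (hwS p hp.1).add_const (-η))
    ?_ x ⟨hx, mem_closedBall_zero_iff.2 hxR⟩
  rintro y ⟨⟨hyF, -⟩, hyO⟩
  by_cases hy : y ∈ O
  · have hyR : R ≤ ‖y‖ := not_lt.1 fun h => hyO ⟨hy, mem_ball_zero_iff.2 h⟩
    linarith [hR hyR hyF]
  · linarith [hbdry y ⟨hyF, hy⟩]

end Comparison

section Barrier

open Matrix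

variable {n k : ℕ} {a : Fin n → ℝ} {α R₀ t : ℝ}

lemma quadA_diagonal (a : Fin n → ℝ) (x : Euc n) :
    quadA n (diagonal a) x = 1 / 2 * ∑ i, a i * x i ^ 2 := by
  simp only [quadA, diagonal_apply, mul_ite, ite_mul, mul_zero, zero_mul, Finset.sum_ite_eq,
    Finset.mem_univ, if_true]
  congr! 2 with i
  ring

lemma continuous_quadA (A : Matrix (Fin n) (Fin n) ℝ) : Continuous (quadA n A) := by
  unfold quadA
  fun_prop

lemma quadA_diagonal_add_smul (a : Fin n → ℝ) (p v : Euc n) (t : ℝ) :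
    quadA n (diagonal a) (p + t • v) = quadA n (diagonal a) p +
      (a * p.ofLp) ⬝ᵥ v.ofLp * t + quadA n (diagonal a) v * t ^ 2 := by
  simp only [quadA_diagonal, dotProduct, Finset.mul_sum, Finset.sum_mul, ← Finset.sum_add_distrib]
  refine Finset.sum_congr rfl fun i _ => ?_
  simp only [PiLp.add_apply, PiLp.smul_apply, smul_eq_mul, Pi.mul_apply]
  ring

lemma exists_mul_norm_sq_le_quadA_diagonal (ha : ∀ i, 0 < a i) :
    ∃ d > 0, ∀ x, d * ‖x‖ ^ 2 ≤ quadA n (diagonal a) x := by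
  obtain _ | _ := isEmpty_or_nonempty (Fin n)
  · exact ⟨1, one_pos, fun x => by simp [quadA_diagonal, EuclideanSpace.real_norm_sq_eq]⟩
  obtain ⟨i₀, hi₀⟩ := Finite.exists_min a
  refine ⟨1 / 2 * a i₀, mul_pos one_half_pos (ha i₀), fun x => ?_⟩
  rw [quadA_diagonal, EuclideanSpace.real_norm_sq_eq, mul_assoc, Finset.mul_sum]
  gcongr with i
  exact hi₀ i

lemma isCompact_setOf_quadA_diagonal_le (ha : ∀ i, 0 < a i) (R : ℝ) :
    IsCompact {x | quadA n (diagonal a) x ≤ R} := by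
  obtain ⟨d, hd, hcoer⟩ := exists_mul_norm_sq_le_quadA_diagonal ha
  refine (isCompact_closedBall (0 : Euc n) √(R / d)).of_isClosed_subset
    (isClosed_le (continuous_quadA _) continuous_const) fun x hx => ?_
  rw [mem_closedBall_zero_iff]
  refine Real.le_sqrt_of_sq_le ((le_div_iff₀' hd).2 ((hcoer x).trans hx))

lemma isSubsolAt_comp_quadA (hk : 1 ≤ k) (hkn : k ≤ n) (ha : ∀ i, 0 < a i) {p : Euc n}
    {f g : ℝ → ℝ} {g' : ℝ} (hf : ∀ᶠ s in 𝓝 (quadA n (diagonal a) p), HasDerivAt f (g s) s)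
    (hg : HasDerivAt g g' (quadA n (diagonal a) p)) (hg₀ : 0 < g (quadA n (diagonal a) p))
    (hg' : g' ≤ 0)
    (hS : 1 ≤ g (quadA n (diagonal a) p) ^ k * esymmVec n k a +
      hkfun n k a * (2 * quadA n (diagonal a) p) * (g' * g (quadA n (diagonal a) p) ^ (k - 1))) :
    IsSubsolAt n k (fun x => f (quadA n (diagonal a) x)) p := by
  set s := quadA n (diagonal a) p with hs
  set N := diagonal (g s • a) + g' • vecMulVec (a * p.ofLp) (a * p.ofLp)
  have hsum : ∑ i, a i * p.ofLp i ^ 2 = 2 * s := by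
    rw [hs, quadA_diagonal]
    ring
  have hN₁ : 1 ≤ matSk n k N := hS.trans
    (hsum ▸ le_matSk_diagonal_add_smul_vecMulVec hk hkn ha hg₀.le hg' p.ofLp)
  have hdiag : MemGarding n k (diagonal (g s • a)) :=
    memGarding_diagonal (fun i => mul_pos hg₀ (ha i)) hkn
  refine ⟨N, hdiag.add_smul_vecMulVec_of_nonpos hkn hg' (one_pos.trans_le hN₁), hN₁, fun v => ?_⟩
  have hquad : v.ofLp ⬝ᵥ N *ᵥ v.ofLp =
      g' * ((a * p.ofLp) ⬝ᵥ v.ofLp) ^ 2 + g s * (2 * quadA n (diagonal a) v) := by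
    have hdiag_quad : v.ofLp ⬝ᵥ diagonal a *ᵥ v.ofLp = 2 * quadA n (diagonal a) v := by
      rw [quadA_diagonal, ← mul_assoc, mul_one_div_cancel two_ne_zero, one_mul]
      exact Finset.sum_congr rfl fun i _ => by rw [mulVec_diagonal]; ring
    simp only [N, diagonal_smul, add_mulVec, smul_mulVec, vecMulVec_mulVec, dotProduct_add,
      dotProduct_smul, hdiag_quad, smul_eq_mul, op_smul_eq_smul, dotProduct_comm v.ofLp (a * _)]
    ring
  rw [hquad]
  exact .comp_of_quadratic (quadA_diagonal_add_smul a p v) hf hg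

lemma one_le_genInt (n k : ℕ) (a : Fin n → ℝ) (hα : 0 ≤ α) (ht : 0 < t) :
    1 ≤ genInt n k a α t :=
  Real.one_le_rpow (le_add_of_nonneg_right (by positivity)) (by positivity)

lemma genInt_pow (hk : 1 ≤ k) (a : Fin n → ℝ) (hα : 0 ≤ α) (ht : 0 < t) :
    genInt n k a α t ^ k = 1 + α * t ^ genExp n k a := by
  rw [genInt, one_div]
  exact Real.rpow_inv_natCast_pow (by positivity) (by omega)

lemma genInt_sub_one_le (hk : 1 ≤ k) (a : Fin n → ℝ) (hα : 0 ≤ α) (ht : 0 < t) :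
    genInt n k a α t - 1 ≤ α * t ^ genExp n k a := by
  rw [sub_le_iff_le_add', ← genInt_pow hk a hα ht]
  exact le_self_pow₀ (one_le_genInt n k a hα ht) (by omega)

lemma hasDerivAt_genInt (hk : 1 ≤ k) (a : Fin n → ℝ) (hα : 0 ≤ α) (ht : 0 < t) :
    HasDerivAt (genInt n k a α)
      (α * (genExp n k a * t ^ (genExp n k a - 1)) / (k * genInt n k a α t ^ (k - 1))) t := by
  set X := 1 + α * t ^ genExp n k a
  have hX₀ : 0 < X := by positivity
  have hg₀ : 0 < genInt n k a α t := one_pos.trans_le (one_le_genInt n k a hα ht)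
  refine ((((Real.hasDerivAt_rpow_const (Or.inl ht.ne')).const_mul α).const_add 1).rpow_const
    (Or.inl hX₀.ne')).congr_deriv ?_
  have hpow : X ^ ((1 : ℝ) / k - 1) = 1 / genInt n k a α t ^ (k - 1) := by
    have hgX : X ^ ((1 : ℝ) / k) = genInt n k a α t := rfl
    rw [Real.rpow_sub_one hX₀.ne', hgX, div_eq_div_iff hX₀.ne' (by positivity), one_mul,
      mul_pow_sub_one (by omega), genInt_pow hk a hα ht]
  rw [hpow]
  field_simp

lemma continuousOn_genInt (hk : 1 ≤ k) (a : Fin n → ℝ) (hα : 0 ≤ α) :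
    ContinuousOn (genInt n k a α) (Set.Ioi 0) :=
  fun _ ht => (hasDerivAt_genInt hk a hα ht).continuousAt.continuousWithinAt

lemma intervalIntegrable_genInt (hk : 1 ≤ k) (a : Fin n → ℝ) (hα : 0 ≤ α) (hR₀ : 0 < R₀)
    (ht : 0 < t) : IntervalIntegrable (genInt n k a α) volume R₀ t :=
  ((continuousOn_genInt hk a hα).mono fun _ hs => (lt_min hR₀ ht).trans_le hs.1).intervalIntegrable

lemma hasDerivAt_integral_genInt (hk : 1 ≤ k) (a : Fin n → ℝ) (hα : 0 ≤ α) (hR₀ : 0 < R₀)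
    (ht : 0 < t) :
    HasDerivAt (fun q => ∫ s in R₀..q, genInt n k a α s) (genInt n k a α t) t :=
  intervalIntegral.integral_hasDerivAt_right (intervalIntegrable_genInt hk a hα hR₀ ht)
    ((continuousOn_genInt hk a hα).stronglyMeasurableAtFilter isOpen_Ioi t ht)
    (hasDerivAt_genInt hk a hα ht).continuousAt

lemma two_mul_hkfun_mul_genExp (hk : 1 ≤ k) (hkn : k ≤ n) (ha : ∀ i, 0 < a i) :
    2 * hkfun n k a * genExp n k a = -k := by
  have := hkfun_pos hk hkn ha
  rw [genExp]
  field_simp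

lemma genExp_lt_neg_one (hn : 3 ≤ n) (hk : 1 ≤ k) (hkn : k ≤ n) (hA : MemA n k (diagonal a))
    (hk₁ : k = 1 → (⨆ i, a i) < 1 / 2) : genExp n k a < -1 := by
  have := hkfun_pos hk hkn hA.diagonal_pos
  rw [genExp, neg_div, neg_lt_neg_iff, one_lt_div (by positivity)]
  exact two_mul_hkfun_lt hn hk hkn hA hk₁

lemma integrableOn_genInt_sub_one (hk : 1 ≤ k) (he : genExp n k a < -1) (hα : 0 ≤ α)
    (hR₀ : 0 < R₀) : IntegrableOn (fun t => genInt n k a α t - 1) (Set.Ioi R₀) := by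
  refine ((integrableOn_Ioi_rpow_of_lt he hR₀).const_mul α).mono'
    (((continuousOn_genInt hk a hα).mono (Set.Ioi_subset_Ioi hR₀.le)).sub
      continuousOn_const |>.aestronglyMeasurable measurableSet_Ioi) ?_
  filter_upwards [ae_restrict_mem measurableSet_Ioi] with t ht
  have ht₀ : 0 < t := hR₀.trans ht
  rw [Real.norm_of_nonneg (sub_nonneg.2 (one_le_genInt n k a hα ht₀))]
  exact genInt_sub_one_le hk a hα ht₀

lemma ubar_eq_zero {x : Euc n} (k : ℕ) (α : ℝ) (hx : quadA n (diagonal a) x = R₀) :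
    ubar n k a R₀ α x = 0 := by
  rw [ubar, hx, intervalIntegral.integral_same]

lemma continuousOn_ubar (hk : 1 ≤ k) (a : Fin n → ℝ) (hα : 0 ≤ α) (hR₀ : 0 < R₀) :
    ContinuousOn (ubar n k a R₀ α) {x | R₀ ≤ quadA n (diagonal a) x} := fun _ hx =>
  ((hasDerivAt_integral_genInt hk a hα hR₀ (hR₀.trans_le hx)).continuousAt.comp
    (continuous_quadA (diagonal a)).continuousAt).continuousWithinAt

/-- `g = genInt` solves `gᵏ + 2 hₖ t g' gᵏ⁻¹ = 1`, the equality case of the condition of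
`isSubsolAt_comp_quadA`. -/
lemma isSubsolAt_ubar (hk : 1 ≤ k) (hkn : k ≤ n) (hA : MemA n k (diagonal a)) (hα : 0 ≤ α)
    (hR₀ : 0 < R₀) {p : Euc n} (hp : R₀ ≤ quadA n (diagonal a) p) :
    IsSubsolAt n k (ubar n k a R₀ α) p := by
  have ha := hA.diagonal_pos
  set t := quadA n (diagonal a) p
  have ht₀ : 0 < t := hR₀.trans_le hp
  set e := genExp n k a with he
  set g := genInt n k a α t with hg
  have hg₀ : 0 < g := one_pos.trans_le (one_le_genInt n k a hα ht₀)
  have hk₀ : (0 : ℝ) < k := by exact_mod_cast hk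
  have hhe : 2 * hkfun n k a * e = -k := two_mul_hkfun_mul_genExp hk hkn ha
  have he₀ : e ≤ 0 := by
    rw [he, genExp, neg_div]
    have := hkfun_pos hk hkn ha
    exact neg_nonpos.2 (by positivity)
  have hode : g ^ k + hkfun n k a * (2 * t) *
      (α * (e * t ^ (e - 1)) / (k * g ^ (k - 1)) * g ^ (k - 1)) = 1 := by
    have ht_pow : t ^ (e - 1) * t = t ^ e := by
      rw [Real.rpow_sub_one ht₀.ne', div_mul_cancel₀ _ ht₀.ne']
    calc _ = g ^ k + 2 * hkfun n k a * e * (α * (t ^ (e - 1) * t)) / k := by field_simp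
      _ = 1 := by
        rw [hhe, ht_pow, hg, genInt_pow hk a hα ht₀]
        field_simp
        ring
  refine isSubsolAt_comp_quadA hk hkn ha (f := fun q => ∫ s in R₀..q, genInt n k a α s) ?_
    (hasDerivAt_genInt hk a hα ht₀) hg₀ ?_ (by rw [hA.esymmVec_eq_one hkn, mul_one, hode])
  · filter_upwards [lt_mem_nhds ht₀] with s hs using hasDerivAt_integral_genInt hk a hα hR₀ hs
  · exact div_nonpos_of_nonpos_of_nonneg
      (mul_nonpos_of_nonneg_of_nonpos hα (mul_nonpos_of_nonpos_of_nonneg he₀ (by positivity)))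
      (by positivity)

lemma ubar_le_quadA_add_muA (hk : 1 ≤ k) (he : genExp n k a < -1) (hα : 0 ≤ α) (hR₀ : 0 < R₀)
    {x : Euc n} (hx : R₀ ≤ quadA n (diagonal a) x) :
    ubar n k a R₀ α x ≤ quadA n (diagonal a) x + muA n k a R₀ α := by
  set q := quadA n (diagonal a) x
  have hsub : (∫ t in R₀..q, (genInt n k a α t - 1)) = ubar n k a R₀ α x - (q - R₀) := by
    rw [intervalIntegral.integral_sub (intervalIntegrable_genInt hk a hα hR₀ (hR₀.trans_le hx))
      intervalIntegrable_const, integral_one]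
    rfl
  have hmono : (∫ t in R₀..q, (genInt n k a α t - 1)) ≤
      ∫ t in Set.Ioi R₀, (genInt n k a α t - 1) := by
    rw [intervalIntegral.integral_of_le hx]
    refine setIntegral_mono_set (integrableOn_genInt_sub_one hk he hα hR₀) ?_
      Set.Ioc_subset_Ioi_self.eventuallyLE
    filter_upwards [ae_restrict_mem measurableSet_Ioi] with t ht
    exact sub_nonneg.2 (one_le_genInt n k a hα (hR₀.trans ht))
  rw [muA]
  linarith

lemma exists_forall_le_ubar (hk : 1 ≤ k) (he : genExp n k a ≤ 0) (hR₀ : 0 < R₀) (B : ℝ) :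
    ∃ α : ℝ, 0 ≤ α ∧ ∀ x : Euc n, quadA n (diagonal a) x = R₀ + 1 → B ≤ ubar n k a R₀ α x := by
  have hR₁ : 0 < R₀ + 1 := by linarith
  set α : ℝ := |B| ^ k * (R₀ + 1) ^ (-genExp n k a) with hα_def
  have hα : 0 ≤ α := by positivity
  refine ⟨α, hα, fun x hx => ?_⟩
  have hle : ∀ t ∈ Set.Icc R₀ (R₀ + 1), |B| ≤ genInt n k a α t := fun t ht => by
    have ht₀ : 0 < t := hR₀.trans_le ht.1
    rw [← pow_le_pow_iff_left₀ (abs_nonneg B)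
      (zero_le_one.trans (one_le_genInt n k a hα ht₀)) (by omega : k ≠ 0)]
    calc |B| ^ k = α * (R₀ + 1) ^ genExp n k a := by
          rw [hα_def, mul_assoc, ← Real.rpow_add hR₁, neg_add_cancel, Real.rpow_zero, mul_one]
      _ ≤ α * t ^ genExp n k a := by
          gcongr ?_ * ?_
          exact Real.rpow_le_rpow_of_nonpos ht₀ ht.2 he
      _ ≤ genInt n k a α t ^ k := by
          rw [genInt_pow hk a hα ht₀]
          linarith
  calc B ≤ |B| := le_abs_self B
    _ = ∫ _ in R₀..R₀ + 1, |B| := by simp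
    _ ≤ ∫ t in R₀..R₀ + 1, genInt n k a α t :=
      intervalIntegral.integral_mono_on (by linarith) intervalIntegrable_const
        (intervalIntegrable_genInt hk a hα hR₀ hR₁) hle
    _ = ubar n k a R₀ α x := by rw [ubar, hx]

end Barrier

section ExteriorProblem

open Matrix Metric

variable {n k : ℕ} {a : Fin n → ℝ} {x₀ : Euc n} {ε c R₀ α μ : ℝ} {u : Euc n → ℝ}

/-- Supersolutions of the exterior Dirichlet problem of which `ExtBallSol` collects the solutions;
no convexity is required. -/
structure IsExtSupersol (n k : ℕ) (a : Fin n → ℝ) (x₀ : Euc n) (ε c : ℝ) (u : Euc n → ℝ) :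
    Prop where
  continuousOn : ContinuousOn u (ball x₀ ε)ᶜ
  contDiffAt : ∀ p ∈ (closedBall x₀ ε)ᶜ, ContDiffAt ℝ 2 u p
  skHess_le_one : ∀ p ∈ (closedBall x₀ ε)ᶜ, SkHess n k u p ≤ 1
  nonneg_on_sphere : ∀ p ∈ sphere x₀ ε, 0 ≤ u p
  eventually_le : ∀ η > 0, ∀ᶠ x in cocompact (Euc n), quadA n (diagonal a) x + c ≤ u x + η

/-- `k`-convex subsolutions of the exterior Dirichlet problem of which `ExtBallSol` collects the
solutions. -/
structure IsExtSubsol (n k : ℕ) (a : Fin n → ℝ) (x₀ : Euc n) (ε c : ℝ) (u : Euc n → ℝ) :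
    Prop where
  continuousOn : ContinuousOn u (ball x₀ ε)ᶜ
  contDiffAt : ∀ p ∈ (closedBall x₀ ε)ᶜ, ContDiffAt ℝ 2 u p
  kConvexOn : KConvexOn n k u (closedBall x₀ ε)ᶜ
  one_le_skHess : ∀ p ∈ (closedBall x₀ ε)ᶜ, 1 ≤ SkHess n k u p
  nonpos_on_sphere : ∀ p ∈ sphere x₀ ε, u p ≤ 0
  eventually_le : ∀ η > 0, ∀ᶠ x in cocompact (Euc n), u x ≤ quadA n (diagonal a) x + c + η

lemma SmoothOnNhd.contDiffAt {S : Set (Euc n)} (hu : SmoothOnNhd n u S) {p : Euc n} (hp : p ∈ S) :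
    ContDiffAt ℝ 2 u p := by
  obtain ⟨U, hU, hSU, hu⟩ := hu
  exact (hu.contDiffAt (hU.mem_nhds (hSU hp))).of_le (WithTop.coe_le_coe.2 (le_top : (2 : ℕ∞) ≤ ⊤))

namespace ExtBallSol

lemma eventually_abs_sub_lt (hu : ExtBallSol n k a x₀ ε c u) {η : ℝ} (hη : 0 < η) :
    ∀ᶠ x in cocompact (Euc n), |u x - (quadA n (diagonal a) x + c)| < η := by
  obtain ⟨-, -, -, -, hlim⟩ := hu
  simpa only [Real.dist_eq, sub_zero] using Metric.tendsto_nhds.1 hlim η hη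

lemma isExtSupersol (hu : ExtBallSol n k a x₀ ε c u) (hε : 0 < ε) :
    IsExtSupersol n k a x₀ ε c u := by
  have hlim {η : ℝ} (hη : 0 < η) := hu.eventually_abs_sub_lt hη
  obtain ⟨hsmooth, -, hS, hsphere, -⟩ := hu
  rw [closure_ball x₀ hε.ne'] at hS
  refine ⟨fun p hp => (hsmooth.contDiffAt hp).continuousAt.continuousWithinAt,
    fun p hp => hsmooth.contDiffAt fun h => hp (ball_subset_closedBall h),
    fun p hp => (hS p hp).le, fun p hp => (hsphere p hp).ge, fun η hη => ?_⟩
  filter_upwards [hlim hη] with x hx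
  linarith [(abs_lt.1 hx).1]

lemma isExtSubsol (hu : ExtBallSol n k a x₀ ε c u) (hε : 0 < ε) :
    IsExtSubsol n k a x₀ ε c u := by
  have hlim {η : ℝ} (hη : 0 < η) := hu.eventually_abs_sub_lt hη
  obtain ⟨hsmooth, hconv, hS, hsphere, -⟩ := hu
  rw [closure_ball x₀ hε.ne'] at hconv hS
  refine ⟨fun p hp => (hsmooth.contDiffAt hp).continuousAt.continuousWithinAt,
    fun p hp => hsmooth.contDiffAt fun h => hp (ball_subset_closedBall h), hconv,
    fun p hp => (hS p hp).ge, fun p hp => (hsphere p hp).le, fun η hη => ?_⟩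
  filter_upwards [hlim hη] with x hx
  linarith [(abs_lt.1 hx).2]

end ExtBallSol

lemma mem_sphere_of_notMem_ball_of_mem_closedBall {X : Type*} [PseudoMetricSpace X] {x y : X}
    {r : ℝ} (h : y ∉ ball x r) (h' : y ∈ closedBall x r) : y ∈ sphere x r := by
  rw [← closedBall_sdiff_ball]
  exact ⟨h', h⟩

namespace IsExtSupersol

lemma ubar_add_le (hu : IsExtSupersol n k a x₀ ε c u) (hk : 1 ≤ k) (hkn : k ≤ n)
    (hA : MemA n k (diagonal a)) (he : genExp n k a < -1) (hα : 0 ≤ α) (hR₀ : 0 < R₀)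
    (hball : closedBall x₀ ε ⊆ {x | quadA n (diagonal a) x < R₀}) (hc : muA n k a R₀ α ≤ c)
    (hμ : μ ≤ 0) (hμu : ∀ x, quadA n (diagonal a) x = R₀ → μ ≤ u x) :
    ∀ x, R₀ ≤ quadA n (diagonal a) x → ubar n k a R₀ α x + μ ≤ u x := by
  have hQ : Continuous (quadA n (diagonal a)) := continuous_quadA _
  have hout {x : Euc n} (hx : R₀ ≤ quadA n (diagonal a) x) : x ∈ (closedBall x₀ ε)ᶜ :=
    fun h => hx.not_gt (hball h)
  refine le_of_isSubsolAt hk hkn (F := {x | R₀ ≤ quadA n (diagonal a) x})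
    (O := {x | R₀ < quadA n (diagonal a) x}) (isClosed_le continuous_const hQ)
    (isOpen_lt continuous_const hQ) (Set.ofPred_subset_ofPred.2 fun _ => le_of_lt)
    (hu.continuousOn.mono fun x hx h => hout hx (ball_subset_closedBall h))
    ((continuousOn_ubar hk a hα hR₀).add continuousOn_const)
    (fun p hp => hu.contDiffAt p (hout hp.le)) (fun p hp => hu.skHess_le_one p (hout hp.le))
    (fun p hp => (isSubsolAt_ubar hk hkn hA hα hR₀ hp.le).add_const μ) ?_ fun η hη => ?_
  · rintro x ⟨hx, hx'⟩
    have hxR₀ : quadA n (diagonal a) x = R₀ := le_antisymm (not_lt.1 hx') hx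
    rw [ubar_eq_zero k α hxR₀, zero_add]
    exact hμu x hxR₀
  · filter_upwards [hu.eventually_le η hη] with x hx hxR₀
    linarith [ubar_le_quadA_add_muA hk he hα hR₀ hxR₀]

lemma half_norm_sub_sq_add_le (hu : IsExtSupersol n k a x₀ ε c u) (hk : 1 ≤ k) (hkn : k ≤ n)
    (ha : ∀ i, 0 < a i) {R : ℝ} (hμ : ∀ x ∈ sphere x₀ ε, μ ≤ u x)
    (hR : ∀ x ∉ closedBall x₀ ε, quadA n (diagonal a) x = R →
      1 / 2 * ‖x - x₀‖ ^ 2 + (μ - 1 / 2 * ε ^ 2) ≤ u x) :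
    ∀ x ∉ ball x₀ ε, quadA n (diagonal a) x ≤ R →
      1 / 2 * ‖x - x₀‖ ^ 2 + (μ - 1 / 2 * ε ^ 2) ≤ u x := by
  have hQ : Continuous (quadA n (diagonal a)) := continuous_quadA _
  suffices h : ∀ x ∈ {x | quadA n (diagonal a) x ≤ R} \ ball x₀ ε,
      1 / 2 * ‖x - x₀‖ ^ 2 + (μ - 1 / 2 * ε ^ 2) ≤ u x from fun x hx hxR => h x ⟨hxR, hx⟩
  refine le_on_isCompact_of_isSubsolAt hk hkn
    (O := {x | quadA n (diagonal a) x < R} \ closedBall x₀ ε)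
    ((isCompact_setOf_quadA_diagonal_le ha R).diff isOpen_ball)
    ((isOpen_lt hQ continuous_const).sdiff isClosed_closedBall)
    (Set.sdiff_subset_sdiff (Set.ofPred_subset_ofPred.2 fun _ => le_of_lt) ball_subset_closedBall)
    (hu.continuousOn.mono fun x hx => hx.2) (by fun_prop) (fun p hp => hu.contDiffAt p hp.2)
    (fun p hp => hu.skHess_le_one p hp.2)
    (fun p _ => (isSubsolAt_half_norm_sub_sq hkn x₀ p).add_const _) ?_
  rintro x ⟨⟨hxR, hx⟩, hx'⟩
  by_cases hx_closed : x ∈ closedBall x₀ ε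
  · have hsphere := mem_sphere_of_notMem_ball_of_mem_closedBall hx hx_closed
    rw [mem_sphere_iff_norm.1 hsphere]
    linarith [hμ x hsphere]
  · exact hR x hx_closed (le_antisymm hxR (not_lt.1 fun h => hx' ⟨h, hx_closed⟩))

/-- If `u` had a negative minimum `u p` over `{Q ≤ R₀} \ B_ε(x₀)`, then `ū + u p` would bound `u`
from below on `{Q ≥ R₀}`. On `{Q = R₀ + 1}` this exceeds the paraboloid that equals `u p` on the
sphere, and comparison with the paraboloid forces `p` onto the sphere, where `u ≥ 0`. -/
lemma nonneg (hu : IsExtSupersol n k a x₀ ε c u) (hk : 1 ≤ k) (hkn : k ≤ n)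
    (hA : MemA n k (diagonal a)) (he : genExp n k a < -1) (hε : 0 ≤ ε) (hα : 0 ≤ α) (hR₀ : 0 < R₀)
    (hball : closedBall x₀ ε ⊆ {x | quadA n (diagonal a) x < R₀}) (hc : muA n k a R₀ α ≤ c)
    (hubar : ∀ x, quadA n (diagonal a) x = R₀ + 1 → 1 / 2 * ‖x - x₀‖ ^ 2 ≤ ubar n k a R₀ α x) :
    ∀ x ∉ ball x₀ ε, quadA n (diagonal a) x ≤ R₀ → 0 ≤ u x := by
  intro x hx hxR₀
  have ha := hA.diagonal_pos
  obtain ⟨p, ⟨hpR₀, hp⟩, hmin⟩ := ((isCompact_setOf_quadA_diagonal_le ha R₀).diff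
    isOpen_ball).exists_isMinOn ⟨x, hxR₀, hx⟩ (hu.continuousOn.mono fun y hy => hy.2)
  suffices hp₀ : 0 ≤ u p from hp₀.trans (hmin ⟨hxR₀, hx⟩)
  by_contra! hneg
  have houter := hu.ubar_add_le hk hkn hA he hα hR₀ hball hc hneg.le fun y hy =>
    hmin ⟨hy.le, fun h => (hball (ball_subset_closedBall h)).ne hy⟩
  have hparaboloid := hu.half_norm_sub_sq_add_le hk hkn ha (R := R₀ + 1) (μ := u p)
    (fun y hy => hneg.le.trans (hu.nonneg_on_sphere y hy))
    (fun y _ hy => by linarith [houter y (by linarith), hubar y hy, sq_nonneg ε]) p hp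
    (hpR₀.trans (by linarith))
  have hp_le : ‖p - x₀‖ ≤ ε := (sq_le_sq₀ (norm_nonneg _) hε).1 (by linarith)
  exact hneg.not_ge (hu.nonneg_on_sphere p
    (mem_sphere_of_notMem_ball_of_mem_closedBall hp (mem_closedBall_iff_norm.2 hp_le)))

end IsExtSupersol

lemma IsExtSubsol.le_of_isExtSupersol {ε₁ ε₂ : ℝ} {u₁ u₂ : Euc n → ℝ}
    (hu₂ : IsExtSubsol n k a x₀ ε₂ c u₂) (hu₁ : IsExtSupersol n k a x₀ ε₁ c u₁) (hk : 1 ≤ k)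
    (hkn : k ≤ n) (hε : ε₁ ≤ ε₂) (hnonneg : ∀ x ∈ sphere x₀ ε₂, 0 ≤ u₁ x) :
    ∀ x ∉ ball x₀ ε₂, u₂ x ≤ u₁ x := by
  have hclosedBall : (closedBall x₀ ε₂)ᶜ ⊆ (closedBall x₀ ε₁)ᶜ :=
    Set.compl_subset_compl.2 (closedBall_subset_closedBall hε)
  refine le_of_isSubsolAt hk hkn (F := (ball x₀ ε₂)ᶜ) (O := (closedBall x₀ ε₂)ᶜ)
    isOpen_ball.isClosed_compl isClosed_closedBall.isOpen_compl
    (Set.compl_subset_compl.2 ball_subset_closedBall)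
    (hu₁.continuousOn.mono (Set.compl_subset_compl.2 (ball_subset_ball hε))) hu₂.continuousOn
    (fun p hp => hu₁.contDiffAt p (hclosedBall hp))
    (fun p hp => hu₁.skHess_le_one p (hclosedBall hp))
    (fun p hp => isSubsolAt_of_one_le_skHess (hu₂.contDiffAt p hp) hu₂.kConvexOn hp
      (hu₂.one_le_skHess p hp)) ?_ fun η hη => ?_
  · rintro x ⟨hx, hx'⟩
    have hsphere := mem_sphere_of_notMem_ball_of_mem_closedBall hx (not_not.1 hx')
    exact (hu₂.nonpos_on_sphere x hsphere).trans (hnonneg x hsphere)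
  · filter_upwards [hu₁.eventually_le (η / 2) (half_pos hη),
      hu₂.eventually_le (η / 2) (half_pos hη)] with x h₁ h₂ _
    linarith

lemma exists_half_norm_sub_sq_le_ubar (hk : 1 ≤ k) (ha : ∀ i, 0 < a i) (he : genExp n k a ≤ 0)
    (r : ℝ) :
    ∃ R₀ α : ℝ, 0 < R₀ ∧ 0 ≤ α ∧ closedBall 0 r ⊆ {x | quadA n (diagonal a) x < R₀} ∧
      ∀ x₀ ∈ closedBall (0 : Euc n) r, ∀ x, quadA n (diagonal a) x = R₀ + 1 →
        1 / 2 * ‖x - x₀‖ ^ 2 ≤ ubar n k a R₀ α x := by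
  obtain ⟨M, hM⟩ := (isCompact_closedBall (0 : Euc n) r).bddAbove_image
    (continuous_quadA (diagonal a)).continuousOn
  obtain ⟨B, hB⟩ := (isCompact_setOf_quadA_diagonal_le ha (|M| + 1 + 1)).bddAbove_image
    (f := fun x => 1 / 2 * (‖x‖ + r) ^ 2) (by fun_prop)
  have hR₀ : 0 < |M| + 1 := by positivity
  obtain ⟨α, hα, hubar⟩ := exists_forall_le_ubar hk he hR₀ B
  refine ⟨|M| + 1, α, hR₀, hα, fun x hx => ?_, fun x₀ hx₀ x hx => ?_⟩
  · have hxM : quadA n (diagonal a) x ≤ M := hM (Set.mem_image_of_mem _ hx)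
    exact (hxM.trans (le_abs_self M)).trans_lt (lt_add_one _)
  · calc 1 / 2 * ‖x - x₀‖ ^ 2 ≤ 1 / 2 * (‖x‖ + r) ^ 2 := by
          gcongr
          exact (norm_sub_le x x₀).trans (by gcongr; exact mem_closedBall_zero_iff.1 hx₀)
      _ ≤ B := hB (Set.mem_image_of_mem _ hx.le)
      _ ≤ ubar n k a (|M| + 1) α x := hubar x hx

theorem statement12_general (hn : 3 ≤ n) (hk : 1 ≤ k) (hkn : k ≤ n) (hA : MemA n k (diagonal a))
    (hk₁ : k = 1 → (⨆ i, a i) < 1 / 2) (r : ℝ) :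
    ∃ cstar : ℝ, 0 < cstar ∧ ∀ c : ℝ, cstar ≤ c → ∀ (x₀ : Euc n) (ε₁ ε₂ : ℝ), 0 ≤ ε₁ → ε₁ ≤ ε₂ →
      closedBall x₀ ε₂ ⊆ closedBall 0 r → ∀ u₁ u₂ : Euc n → ℝ,
        IsExtSupersol n k a x₀ ε₁ c u₁ → IsExtSubsol n k a x₀ ε₂ c u₂ →
        ∀ x, extBy n (ball x₀ ε₂) 0 u₂ x ≤ extBy n (ball x₀ ε₁) 0 u₁ x := by
  have he : genExp n k a < -1 := genExp_lt_neg_one hn hk hkn hA hk₁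
  obtain ⟨R₀, α, hR₀, hα, hr, hubar⟩ :=
    exists_half_norm_sub_sq_le_ubar hk hA.diagonal_pos (by linarith : genExp n k a ≤ 0) r
  refine ⟨max 1 (muA n k a R₀ α), one_pos.trans_le (le_max_left _ _), ?_⟩
  intro c hc x₀ ε₁ ε₂ hε₁ hε hball u₁ u₂ hu₁ hu₂ x
  have hnonneg := hu₁.nonneg hk hkn hA he hε₁ hα hR₀
    ((closedBall_subset_closedBall hε).trans (hball.trans hr)) ((le_max_right _ _).trans hc)
    (hubar x₀ (hball (mem_closedBall_self (hε₁.trans hε))))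
  have hle := hu₂.le_of_isExtSupersol hu₁ hk hkn hε fun y hy =>
    hnonneg y (fun h => (mem_ball.1 h).not_ge (hε.trans (mem_sphere.1 hy).ge))
      (hr (hball (sphere_subset_closedBall hy))).le
  by_cases hx₂ : x ∈ ball x₀ ε₂
  · rw [extBy, if_pos hx₂, extBy]
    split_ifs with hx₁
    · exact le_rfl
    · exact hnonneg x hx₁ (hr (hball (ball_subset_closedBall hx₂))).le
  · rw [extBy, if_neg hx₂, extBy, if_neg fun h => hx₂ (ball_subset_ball hε h)]
    exact hle x hx₂

end ExteriorProblem

/-- the zero-extensions `ũ^ε` are decreasing with respect to `ε`. -/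
theorem statement12 (n k : ℕ) (hn : 3 ≤ n) (hk1 : 1 ≤ k) (hkn : k ≤ n)
    (a : Fin n → ℝ) (hA : MemA n k (Matrix.diagonal a))
    (hk1' : k = 1 → (⨆ i, a i) < 1 / 2)
    (x₀ : Euc n) (hx₀ : x₀ ∈ Metric.ball (0 : Euc n) (1 / 2)) (hx₀' : x₀ ≠ 0) :
    ∃ cstar : ℝ, 0 < cstar ∧ ∀ c : ℝ, cstar ≤ c →
      ∀ ε₁ ε₂ : ℝ, 0 < ε₁ → ε₁ < ε₂ → ε₂ < 1 / 2 →
      ∀ u₁ u₂ : Euc n → ℝ,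
        ExtBallSol n k a x₀ ε₁ c u₁ → ExtBallSol n k a x₀ ε₂ c u₂ →
        ∀ x : Euc n,
          extBy n (Metric.ball x₀ ε₂) 0 u₂ x ≤ extBy n (Metric.ball x₀ ε₁) 0 u₁ x := by
  obtain ⟨cstar, hcstar, hmono⟩ := statement12_general hn hk1 hkn hA hk1' 1
  refine ⟨cstar, hcstar, fun c hc ε₁ ε₂ hε₁ hε hε₂ u₁ u₂ hu₁ hu₂ => ?_⟩
  have hball : Metric.closedBall x₀ ε₂ ⊆ Metric.closedBall 0 1 :=
    Metric.closedBall_subset_closedBall' (by linarith [Metric.mem_ball.1 hx₀])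
  exact hmono c hc x₀ ε₁ ε₂ hε₁.le hε.le hball u₁ u₂ (hu₁.isExtSupersol hε₁)
    (hu₂.isExtSubsol (hε₁.trans hε))
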